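/- Let G be a UD exchange network, let (γ^0, M) be a stable trade outcome, and let κ ∈ (0, 1/2]. Define the Edge Rebalancing iteration γ^{t+1} := κ γ^reb(γ^t) + (1−κ) γ^t, where γ^reb(γ) is defined by γ^reb_i := max_{k∈∂i∖j}(w_{ik}−γ_k)_+ + r_{ij}·Surp_{ij}(γ) for each (i,j)∈M (and symmetrically for j), and γ^reb_i := 0 for nodes i unmatched in M. Then for every t ≥ 0, (γ^t, M) is a stable trade outcome. -/

import Mathlib

namespace EN

open Finset

variable {V : Type*}

/-- The nonnegative part `(x)₊ = max (x, 0)`. -/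
noncomputable def pos (x : ℝ) : ℝ := max x 0

variable [Fintype V] [DecidableEq V]

/-- The maximum of `f` over a finite set of vertices (`0` over the empty set). -/
noncomputable def fmax (s : Finset V) (f : V → ℝ) : ℝ := ⨆ k ∈ s, f k

/-- The offer from `i` to `j` given messages `α` and weights `w`:
`m_{i→j} = (w_{ij} − α_{i\j})₊ − (1/2) (w_{ij} − α_{i\j} − α_{j\i})₊`. -/
noncomputable def offer (w α : V → V → ℝ) (i j : V) : ℝ :=
  pos (w i j - α i j) - (1 / 2) * pos (w i j - α i j - α j i)

/-- The update operator `T` of the natural dynamics: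
`(Tα)_{i\j} = max_{k ∈ ∂i \ j} m_{k→i}`. -/
noncomputable def upd (G : SimpleGraph V) [DecidableRel G.Adj] (w α : V → V → ℝ)
    (i j : V) : ℝ :=
  fmax ((G.neighborFinset i).erase j) fun k => offer w α k i

/-- The earnings estimate `γ_i = max_{k ∈ ∂i} m_{k→i}`. -/
noncomputable def earn (G : SimpleGraph V) [DecidableRel G.Adj] (w α : V → V → ℝ)
    (i : V) : ℝ :=
  fmax (G.neighborFinset i) fun k => offer w α k i

/-- Exchange network weights: symmetric and positive on every edge. -/
def GoodW (G : SimpleGraph V) (w : V → V → ℝ) : Prop :=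
  (∀ i j, w i j = w j i) ∧ ∀ i j, G.Adj i j → 0 < w i j

/-- A valid message vector: nonnegative on all directed edges. -/
def ValidMsg (G : SimpleGraph V) (α : V → V → ℝ) : Prop :=
  ∀ i j, G.Adj i j → 0 ≤ α i j

/-- Fixed point of the natural-dynamics update operator. -/
def IsFixedPt (G : SimpleGraph V) [DecidableRel G.Adj] (w α : V → V → ℝ) : Prop :=
  ∀ i j, G.Adj i j → upd G w α i j = α i j

/-- `ε`-fixed point. -/
def IsEpsFixedPt (G : SimpleGraph V) [DecidableRel G.Adj] (w α : V → V → ℝ) (ε : ℝ) : Prop :=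
  ∀ i j, G.Adj i j → |α i j - upd G w α i j| ≤ ε

/-- The natural dynamics with damping factor `κ`: `α^{t+1} = (1−κ) α^t + κ T α^t`. -/
noncomputable def dyn (G : SimpleGraph V) [DecidableRel G.Adj] (w : V → V → ℝ) (κ : ℝ)
    (α0 : V → V → ℝ) : ℕ → V → V → ℝ
  | 0 => α0
  | t + 1 => fun i j =>
      (1 - κ) * dyn G w κ α0 t i j + κ * upd G w (dyn G w κ α0 t) i j

/-- Sup norm over directed edges. -/
noncomputable def msgSup (G : SimpleGraph V) [DecidableRel G.Adj] (f : V → V → ℝ) : ℝ :=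
  ⨆ p : V × V, if G.Adj p.1 p.2 then |f p.1 p.2| else 0

/-- `M` is a matching of `G`: a symmetric subrelation of adjacency pairing each node
with at most one partner. -/
structure IsMatching (G : SimpleGraph V) (M : V → V → Prop) : Prop where
  subset : ∀ i j, M i j → G.Adj i j
  symm : ∀ i j, M i j → M j i
  unique : ∀ i j k, M i j → M i k → j = k

/-- `(M, γ)` is a trade outcome. -/
def IsOutcome (G : SimpleGraph V) (w : V → V → ℝ) (M : V → V → Prop) (γ : V → ℝ) : Prop :=
  IsMatching G M ∧ (∀ i, 0 ≤ γ i) ∧ (∀ i j, M i j → γ i + γ j = w i j) ∧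
    ∀ i, (∀ j, ¬M i j) → γ i = 0

/-- Stability of an outcome. -/
def Stable (G : SimpleGraph V) (w : V → V → ℝ) (M : V → V → Prop) (γ : V → ℝ) : Prop :=
  ∀ i j, G.Adj i j → ¬M i j → w i j ≤ γ i + γ j

/-- The best alternative of `i` excluding `j`: `max_{k ∈ ∂i \ j} (w_{ik} − γ_k)₊`. -/
noncomputable def bestAlt (G : SimpleGraph V) [DecidableRel G.Adj] (w : V → V → ℝ)
    (γ : V → ℝ) (i j : V) : ℝ :=
  fmax ((G.neighborFinset i).erase j) fun k => pos (w i k - γ k)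

/-- Balance of an outcome. -/
def Balanced (G : SimpleGraph V) [DecidableRel G.Adj] (w : V → V → ℝ) (M : V → V → Prop)
    (γ : V → ℝ) : Prop :=
  ∀ i j, M i j → γ i - bestAlt G w γ i j = γ j - bestAlt G w γ j i

/-- Nash bargaining solution: a stable and balanced trade outcome. -/
def IsNBSolution (G : SimpleGraph V) [DecidableRel G.Adj] (w : V → V → ℝ)
    (M : V → V → Prop) (γ : V → ℝ) : Prop :=
  IsOutcome G w M γ ∧ Stable G w M γ ∧ Balanced G w M γ

/-- `ε`-balance. -/
def EpsBalanced (G : SimpleGraph V) [DecidableRel G.Adj] (w : V → V → ℝ)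
    (M : V → V → Prop) (γ : V → ℝ) (ε : ℝ) : Prop :=
  ∀ i j, M i j → |(γ i - bestAlt G w γ i j) - (γ j - bestAlt G w γ j i)| ≤ ε

/-- `ε`-Nash bargaining solution. -/
def IsEpsNB (G : SimpleGraph V) [DecidableRel G.Adj] (w : V → V → ℝ)
    (M : V → V → Prop) (γ : V → ℝ) (ε : ℝ) : Prop :=
  IsOutcome G w M γ ∧ Stable G w M γ ∧ EpsBalanced G w M γ ε

/-- Feasible point of the LP relaxation of maximum weight matching. -/
def LPFeasible (G : SimpleGraph V) [DecidableRel G.Adj] (x : V → V → ℝ) : Prop :=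
  (∀ i j, x i j = x j i) ∧ (∀ i j, 0 ≤ x i j) ∧ (∀ i j, ¬G.Adj i j → x i j = 0) ∧
    ∀ i, ∑ j ∈ G.neighborFinset i, x i j ≤ 1

/-- LP objective `Σ_{(i,j)∈E} w_{ij} x_{ij}` (each undirected edge counted once). -/
noncomputable def LPval (G : SimpleGraph V) [DecidableRel G.Adj] (w x : V → V → ℝ) : ℝ :=
  (1 / 2) * ∑ i, ∑ j ∈ G.neighborFinset i, w i j * x i j

/-- Optimal point of the LP relaxation of maximum weight matching. -/
def LPOptimal (G : SimpleGraph V) [DecidableRel G.Adj] (w x : V → V → ℝ) : Prop :=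
  LPFeasible G x ∧ ∀ y, LPFeasible G y → LPval G w y ≤ LPval G w x

def Integral (x : V → V → ℝ) : Prop := ∀ i j, x i j = 0 ∨ x i j = 1

def HalfIntegral (x : V → V → ℝ) : Prop := ∀ i j, x i j = 0 ∨ x i j = 1 / 2 ∨ x i j = 1

open Classical in
/-- The LP point associated to a matching. -/
noncomputable def mInd (M : V → V → Prop) (i j : V) : ℝ := if M i j then 1 else 0

/-- The state with offers `m` induces the matching `M`: every node receiving a positive
offer is matched and receives its unique best offer from its partner, and every node
with zero earnings is unmatched. -/
def Induces (G : SimpleGraph V) [DecidableRel G.Adj] (m : V → V → ℝ)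
    (M : V → V → Prop) : Prop :=
  IsMatching G M ∧
    (∀ i, (∃ k, G.Adj i k ∧ 0 < m k i) →
      ∃ j, M i j ∧ ∀ k, G.Adj i k → k ≠ j → m k i < m j i) ∧
    ∀ i, (fmax (G.neighborFinset i) fun k => m k i) = 0 → ∀ j, ¬M i j

/-- Feasibility for the dual LP. -/
def DualFeasible (G : SimpleGraph V) (w : V → V → ℝ) (y : V → ℝ) : Prop :=
  (∀ i, 0 ≤ y i) ∧ ∀ i j, G.Adj i j → w i j ≤ y i + y j

/-- Optimality for the dual LP. -/
def DualOptimal (G : SimpleGraph V) (w : V → V → ℝ) (y : V → ℝ) : Prop :=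
  DualFeasible G w y ∧ ∀ z, DualFeasible G w z → ∑ i, y i ≤ ∑ i, z i

/-- The unmatched balance property at every edge. -/
def UnmatchedBalance (G : SimpleGraph V) [DecidableRel G.Adj] (w : V → V → ℝ)
    (y : V → ℝ) : Prop :=
  ∀ i j, G.Adj i j → y i - bestAlt G w y i j = y j - bestAlt G w y j i

/-! ### Unequal division -/

/-- Valid split fractions: `r_{ij} ∈ (0,1)` with `r_{ij} + r_{ji} = 1` on every edge. -/
def GoodR (G : SimpleGraph V) (r : V → V → ℝ) : Prop :=
  ∀ i j, G.Adj i j → 0 < r i j ∧ r i j < 1 ∧ r i j + r j i = 1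

/-- The UD offer from `i` to `j`. -/
noncomputable def offerUD (w r α : V → V → ℝ) (i j : V) : ℝ :=
  pos (w i j - α i j) - r i j * pos (w i j - α i j - α j i)

/-- The UD update operator. -/
noncomputable def updUD (G : SimpleGraph V) [DecidableRel G.Adj] (w r α : V → V → ℝ)
    (i j : V) : ℝ :=
  fmax ((G.neighborFinset i).erase j) fun k => offerUD w r α k i

/-- The UD earnings estimate. -/
noncomputable def earnUD (G : SimpleGraph V) [DecidableRel G.Adj] (w r α : V → V → ℝ)
    (i : V) : ℝ :=
  fmax (G.neighborFinset i) fun k => offerUD w r α k i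

/-- Fixed point of the UD update operator. -/
def IsFixedPtUD (G : SimpleGraph V) [DecidableRel G.Adj] (w r α : V → V → ℝ) : Prop :=
  ∀ i j, G.Adj i j → updUD G w r α i j = α i j

/-- Correct division. -/
def CorrectDiv (G : SimpleGraph V) [DecidableRel G.Adj] (w r : V → V → ℝ)
    (M : V → V → Prop) (γ : V → ℝ) : Prop :=
  ∀ i j, M i j →
    (1 / r i j) * (γ i - bestAlt G w γ i j) = (1 / r j i) * (γ j - bestAlt G w γ j i)

/-- UD solution: a stable trade outcome satisfying correct division. -/
def IsUDSolution (G : SimpleGraph V) [DecidableRel G.Adj] (w r : V → V → ℝ)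
    (M : V → V → Prop) (γ : V → ℝ) : Prop :=
  IsOutcome G w M γ ∧ Stable G w M γ ∧ CorrectDiv G w r M γ

/-- Edge surplus. -/
noncomputable def surp (G : SimpleGraph V) [DecidableRel G.Adj] (w : V → V → ℝ)
    (γ : V → ℝ) (i j : V) : ℝ :=
  w i j - bestAlt G w γ i j - bestAlt G w γ j i

open Classical in
/-- The rebalanced allocation `γ^reb`. -/
noncomputable def reb (G : SimpleGraph V) [DecidableRel G.Adj] (w r : V → V → ℝ)
    (M : V → V → Prop) (γ : V → ℝ) (i : V) : ℝ :=
  if h : ∃ j, M i j then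
    bestAlt G w γ i h.choose + r i h.choose * surp G w γ i h.choose
  else 0

/-- The Edge Rebalancing iteration `γ^{t+1} = κ γ^reb(γ^t) + (1−κ) γ^t`. -/
noncomputable def rebIter (G : SimpleGraph V) [DecidableRel G.Adj] (w r : V → V → ℝ)
    (M : V → V → Prop) (κ : ℝ) (γ0 : V → ℝ) : ℕ → V → ℝ
  | 0 => γ0
  | t + 1 => fun i =>
      κ * reb G w r M (rebIter G w r M κ γ0 t) i + (1 - κ) * rebIter G w r M κ γ0 t i

/-!
In a stable outcome a node's best alternative is at most its earnings, so every matched edge has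
nonnegative surplus. Hence `γ^reb` is an outcome on the same matching in which each node earns at
least its best alternative; on an unmatched edge `(i, j)` this gives
`w_{ij} ≤ γ^reb_i + γ_j` and `w_{ij} ≤ γ_i + γ^reb_j`. Outcomes on a fixed matching form a convex
set, which gives feasibility of the damped step. For its stability, write
`κ (γ^reb_i + γ^reb_j) + (1 - κ) (γ_i + γ_j)` as the combination
`κ (γ^reb_i + γ_j) + κ (γ_i + γ^reb_j) + (1 - 2κ) (γ_i + γ_j)`, which is convex for `κ ≤ 1/2`.
-/

section

omit [Fintype V] [DecidableEq V]

variable {s : Finset V} {f : V → ℝ} {c : ℝ}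

theorem fmax_nonneg (hf : ∀ k ∈ s, 0 ≤ f k) : 0 ≤ fmax s f :=
  Real.iSup_nonneg fun k => Real.iSup_nonneg (hf k)

-- For `k ∉ s` the inner supremum in `fmax` is `sSup ∅ = 0`.
theorem fmax_le (hc : 0 ≤ c) (h : ∀ k ∈ s, f k ≤ c) : fmax s f ≤ c :=
  Real.iSup_le (fun k => Real.iSup_le (h k) hc) hc

theorem le_fmax {k : V} (hk : k ∈ s) : f k ≤ fmax s f := by
  have hbdd : BddAbove (⋃ k, Set.range fun _ : k ∈ s => f k) :=
    (s.finite_toSet.image f).bddAbove.mono <|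
      Set.iUnion_subset fun _ => Set.range_subset_iff.2 fun hk => Set.mem_image_of_mem f hk
  exact le_ciSup₂ hbdd k hk

variable {G : SimpleGraph V} {w : V → V → ℝ} {M : V → V → Prop} {γ ρ : V → ℝ} {κ : ℝ}

theorem convex_isOutcome : Convex ℝ {γ | IsOutcome G w M γ} := by
  rintro γ ⟨hM, hγ, hγM, hγ0⟩ ρ ⟨-, hρ, hρM, hρ0⟩ a b ha hb hab
  refine ⟨hM, fun i => ?_, fun i j hij => ?_, fun i hi => ?_⟩
  · exact add_nonneg (mul_nonneg ha (hγ i)) (mul_nonneg hb (hρ i))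
  · calc a * γ i + b * ρ i + (a * γ j + b * ρ j)
        = a * (γ i + γ j) + b * (ρ i + ρ j) := by ring
      _ = w i j := by rw [hγM i j hij, hρM i j hij, ← add_mul, hab, one_mul]
  · simp [hγ0 i hi, hρ0 i hi]

theorem Stable.damp (hγ : Stable G w M γ)
    (hleft : ∀ i j, G.Adj i j → ¬M i j → w i j ≤ ρ i + γ j)
    (hright : ∀ i j, G.Adj i j → ¬M i j → w i j ≤ γ i + ρ j)
    (hκ0 : 0 ≤ κ) (hκ : κ ≤ 1 / 2) : Stable G w M (κ • ρ + (1 - κ) • γ) := by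
  intro i j hij hM
  have hκ' : 0 ≤ 1 - 2 * κ := by linarith
  calc w i j = κ * w i j + κ * w i j + (1 - 2 * κ) * w i j := by ring
    _ ≤ κ * (ρ i + γ j) + κ * (γ i + ρ j) + (1 - 2 * κ) * (γ i + γ j) := by
      gcongr
      exacts [hleft i j hij hM, hright i j hij hM, hγ i j hij hM]
    _ = (κ * ρ i + (1 - κ) * γ i) + (κ * ρ j + (1 - κ) * γ j) := by ring

end

section

variable {G : SimpleGraph V} [DecidableRel G.Adj] {w r : V → V → ℝ} {M : V → V → Prop}
  {γ : V → ℝ} {κ : ℝ} {i j k : V}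

theorem bestAlt_nonneg : 0 ≤ bestAlt G w γ i j :=
  fmax_nonneg fun _ _ => le_max_right _ _

theorem sub_le_bestAlt (hik : G.Adj i k) (hkj : k ≠ j) : w i k - γ k ≤ bestAlt G w γ i j :=
  (le_max_left _ _).trans <| le_fmax (f := fun k => pos (w i k - γ k)) (by simp [hik, hkj])

theorem reb_of_matched (hM : IsMatching G M) (hij : M i j) :
    reb G w r M γ i = bestAlt G w γ i j + r i j * surp G w γ i j := by
  have h : ∃ j, M i j := ⟨j, hij⟩
  have hchoose : h.choose = j := hM.unique _ _ _ h.choose_spec hij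
  rw [reb, dif_pos h, hchoose]

theorem reb_of_unmatched (hi : ∀ j, ¬M i j) : reb G w r M γ i = 0 :=
  dif_neg (not_exists.2 hi)

theorem rebIter_succ (γ0 : V → ℝ) (t : ℕ) :
    rebIter G w r M κ γ0 (t + 1) =
      κ • reb G w r M (rebIter G w r M κ γ0 t) + (1 - κ) • rebIter G w r M κ γ0 t :=
  rfl

theorem reb_add_reb (hM : IsMatching G M) (hw : w i j = w j i) (hr : r i j + r j i = 1)
    (hij : M i j) : reb G w r M γ i + reb G w r M γ j = w i j := by
  have hsurp : surp G w γ j i = surp G w γ i j := by rw [surp, surp, hw, sub_right_comm]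
  calc reb G w r M γ i + reb G w r M γ j
      = bestAlt G w γ i j + bestAlt G w γ j i + (r i j + r j i) * surp G w γ i j := by
        rw [reb_of_matched hM hij, reb_of_matched hM (hM.symm i j hij), hsurp]
        ring
    _ = w i j := by
        rw [hr, surp]
        ring

theorem bestAlt_le (hγ : IsOutcome G w M γ) (hstab : Stable G w M γ) (hij : M i j) :
    bestAlt G w γ i j ≤ γ i := by
  obtain ⟨hM, hnonneg, -, -⟩ := hγ
  refine fmax_le (hnonneg i) fun k hk => max_le ?_ (hnonneg i)
  obtain ⟨hkj, hik⟩ : k ≠ j ∧ G.Adj i k := by simpa using hk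
  have hnot : ¬M i k := fun hMik => hkj (hM.unique i k j hMik hij)
  exact sub_le_iff_le_add.2 (hstab i k hik hnot)

theorem surp_nonneg (hγ : IsOutcome G w M γ) (hstab : Stable G w M γ) (hij : M i j) :
    0 ≤ surp G w γ i j := by
  have hi := bestAlt_le hγ hstab hij
  have hj := bestAlt_le hγ hstab (hγ.1.symm i j hij)
  have hsum : γ i + γ j = w i j := hγ.2.2.1 i j hij
  rw [surp]
  linarith

theorem bestAlt_le_reb (hγ : IsOutcome G w M γ) (hstab : Stable G w M γ)
    (hr : 0 ≤ r i j) (hij : M i j) : bestAlt G w γ i j ≤ reb G w r M γ i := by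
  rw [reb_of_matched hγ.1 hij]
  exact le_add_of_nonneg_right (mul_nonneg hr (surp_nonneg hγ hstab hij))

theorem le_reb_add_of_not_matched (hγ : IsOutcome G w M γ) (hstab : Stable G w M γ)
    (hr : ∀ j, M i j → 0 ≤ r i j) (hik : G.Adj i k) (hnot : ¬M i k) :
    w i k ≤ reb G w r M γ i + γ k := by
  by_cases hi : ∃ j, M i j
  · obtain ⟨j, hij⟩ := hi
    have hkj : k ≠ j := fun h => hnot (h ▸ hij)
    exact sub_le_iff_le_add.1 <|
      (sub_le_bestAlt hik hkj).trans (bestAlt_le_reb hγ hstab (hr j hij) hij)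
  · rw [not_exists] at hi
    rw [reb_of_unmatched hi, ← hγ.2.2.2 i hi]
    exact hstab i k hik hnot

theorem IsOutcome.reb (hγ : IsOutcome G w M γ) (hstab : Stable G w M γ)
    (hw : ∀ i j, M i j → w i j = w j i) (hr0 : ∀ i j, M i j → 0 ≤ r i j)
    (hr1 : ∀ i j, M i j → r i j + r j i = 1) : IsOutcome G w M (reb G w r M γ) := by
  refine ⟨hγ.1, fun i => ?_, fun i j hij => reb_add_reb hγ.1 (hw i j hij) (hr1 i j hij) hij,
    fun i => reb_of_unmatched⟩
  by_cases hi : ∃ j, M i j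
  · obtain ⟨j, hij⟩ := hi
    exact bestAlt_nonneg.trans (bestAlt_le_reb hγ hstab (hr0 i j hij) hij)
  · exact (reb_of_unmatched (not_exists.1 hi)).ge

end

/-- The Edge Rebalancing iteration, started from a stable trade
outcome and run with damping `κ ∈ (0, 1/2]`, keeps the outcome a stable trade
outcome at every time `t`. -/
theorem edge_rebalancing_preserves_stability
    {V : Type*} [Fintype V] [DecidableEq V] (G : SimpleGraph V) [DecidableRel G.Adj]
    (w : V → V → ℝ) (hw : GoodW G w) (r : V → V → ℝ) (hr : GoodR G r)
    (M : V → V → Prop) (γ0 : V → ℝ)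
    (h0 : IsOutcome G w M γ0 ∧ Stable G w M γ0)
    (κ : ℝ) (hκ : κ ∈ Set.Ioc (0 : ℝ) (1 / 2)) :
    ∀ t : ℕ, IsOutcome G w M (rebIter G w r M κ γ0 t) ∧
      Stable G w M (rebIter G w r M κ γ0 t) := by
  intro t
  induction t with
  | zero => exact h0
  | succ t ih =>
    obtain ⟨hout, hstab⟩ := ih
    set γ := rebIter G w r M κ γ0 t
    have hadj : ∀ {i j}, M i j → G.Adj i j := hout.1.subset _ _
    have hr0 : ∀ i j, M i j → 0 ≤ r i j := fun i j hij => (hr i j (hadj hij)).1.le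
    have hr1 : ∀ i j, M i j → r i j + r j i = 1 := fun i j hij => (hr i j (hadj hij)).2.2
    have hreb : IsOutcome G w M (reb G w r M γ) :=
      hout.reb hstab (fun i j _ => hw.1 i j) hr0 hr1
    have hleft : ∀ i j, G.Adj i j → ¬M i j → w i j ≤ reb G w r M γ i + γ j :=
      fun i _ hij hnot => le_reb_add_of_not_matched hout hstab (hr0 i) hij hnot
    have hright : ∀ i j, G.Adj i j → ¬M i j → w i j ≤ γ i + reb G w r M γ j := by
      intro i j hij hnot
      rw [hw.1 i j, add_comm]
      exact hleft j i hij.symm fun hji => hnot (hout.1.symm j i hji)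
    rw [rebIter_succ]
    exact ⟨convex_isOutcome hreb hout hκ.1.le (by linarith [hκ.2]) (by ring),
      hstab.damp hleft hright hκ.1.le hκ.2⟩

end EN
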